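/- In the partial observation model, for an arbitrary but fixed control strategy g and each i = 1,…,n, define R^i_t = (Ξ^i_t, Z_{1:t}, U_{1:t-1}). Then: (1) the process {R^i_t : t = 1,…,T} is a controlled Markov process with control action U^i_t, i.e., for conditioning events of positive probability, P(R^i_{t+1} ∈ B | R^i_{1:t}, U^i_{1:t}) = P(R^i_{t+1} ∈ B | R^i_t, U^i_t) for all measurable B; and (2) the instantaneous conditional cost simplifies: E[c_t(Z_t, X_t, U_t) | R^i_{1:t}, U^i_{1:t}] = E[c_t(Z_t, X_t, U_t) | R^i_t, U^i_t]. -/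

import Mathlib

/-!
Two sample points can be recombined by transplanting the local past of station `i`, that is the
primitive variables `Xⁱ₁`, `Wⁱ_s` (`s < t`), `W̃ⁱ_s` (`s ≤ t`), from one into the other (`mixP`).
This is an involution on pairs of samples which preserves the product weight when both have
the same `Z₁` (`weightP_mixP`). Along samples with the same common history `(Z_{1:t}, U_{1:t-1})`
it exchanges the local trajectories of station `i` up to time `t` and touches nothing else
(`mixP_traj`); this is the conditional independence of the stations given the common history. If
station `i` also has the same state and action at time `t` in both samples, what happens at
time `t + 1` is unaffected by the transplant (`mixP_next`).

Now take two information values of station `i` with the same common history, the same current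
action and the same belief. Splitting each according to `Xⁱ_t = x` and exchanging local pasts,
any quantity insensitive to the transplant has the same conditional expectation given either
(`sum_atom_exchange`); equality of the beliefs says that the values `x` get the same weights.
Applied to the events that define `Ξⁱ_{t+1}`, this shows that `Ξⁱ_{t+1}` is determined by
`Ξⁱ_t`, the common history and the new data (`XiBelief_succ_congr`), so `Rⁱ_{t+1}`, like the
instantaneous cost, is insensitive to the transplant on samples of positive weight. Both
conditioning events are unions of information values on which these averages agree, so
averaging over them (`condExp_eq_of_fibers`) gives the same result.
-/

open scoped Classical

namespace ControlSharing

variable {n T : ℕ}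
variable {Z : Type} [Fintype Z] [Nonempty Z]
variable {X : Fin n → Type} [∀ i, Fintype (X i)] [∀ i, Nonempty (X i)]
variable {Y : Fin n → Type} [∀ i, Fintype (Y i)] [∀ i, Nonempty (Y i)]
variable {U : Fin n → Type} [∀ i, Fintype (U i)] [∀ i, Nonempty (U i)]
variable {W0 : Type} [Fintype W0] [Nonempty W0]
variable {W : Fin n → Type} [∀ i, Fintype (W i)] [∀ i, Nonempty (W i)]
variable {WT : Fin n → Type} [∀ i, Fintype (WT i)] [∀ i, Nonempty (WT i)]

/-- A probability weight function on a finite type. -/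
def IsLaw {α : Type} [Fintype α] (P : α → ℝ) : Prop :=
  (∀ a, 0 ≤ P a) ∧ ∑ a, P a = 1

/-- Sample space of primitive random variables for the partial observation model: the initial
shared state `Z₁`, the initial local states `X₁ⁱ`, the shared-dynamics noises `W⁰_t`, the local
plant noises `Wⁱ_t` and the observation noises `W̃ⁱ_t`. -/
abbrev OmegaP (T : ℕ) (Z : Type) (X : Fin n → Type) (W0 : Type) (W WT : Fin n → Type) : Type :=
  Z × (∀ i, X i) × (Fin T → W0) × (∀ i, Fin T → W i) × (∀ i, Fin T → WT i)

/-- The probability weight of a sample point: `Z₁ ~ P_Z`; conditionally on `Z₁` the initial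
local states are independent with `X₁ⁱ ~ P_{Xⁱ|Z}(·|Z₁)`; all plant and observation noises are
independent with laws `P_{W⁰}`, `P_{Wⁱ}`, `P_{W̃ⁱ}`, independent of the initial states. -/
noncomputable def weightP (PZ : Z → ℝ) (PX : ∀ i, Z → X i → ℝ) (PW0 : W0 → ℝ)
    (PW : ∀ i, W i → ℝ) (PWT : ∀ i, WT i → ℝ) (ω : OmegaP T Z X W0 W WT) : ℝ :=
  PZ ω.1 * (∏ i, PX i ω.1 (ω.2.1 i)) * (∏ t, PW0 (ω.2.2.1 t)) *
    (∏ i, ∏ t, PW i (ω.2.2.2.1 i t)) * (∏ i, ∏ t, PWT i (ω.2.2.2.2 i t))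

/-- A control strategy for the partial observation model: station `i` chooses
`Uⁱ_t = gⁱ_t(Z_{1:t}, Yⁱ_{1:t}, U_{1:t-1})`. -/
def StrategyP (Z : Type) (Y U : Fin n → Type) : Type :=
  ∀ (i : Fin n) (t : ℕ), (Fin (t + 1) → Z) → (Fin (t + 1) → Y i) →
    (Fin t → ∀ j, U j) → U i

variable (f0 : ℕ → Z → (∀ j, U j) → W0 → Z)
variable (f : ∀ i, ℕ → Z → X i → (∀ j, U j) → W i → X i)
variable (ℓ : ∀ i, ℕ → X i → WT i → Y i)

/-- The closed-loop trajectory of the partial observation model: histories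
`(Z_{1:t+1}, X_{1:t+1}, Y_{1:t+1}, U_{1:t+1})` generated by
`Z_{t+1} = f⁰_t(Z_t, U_t, W⁰_t)`, `Xⁱ_{t+1} = fⁱ_t(Z_t, Xⁱ_t, U_t, Wⁱ_t)`,
`Yⁱ_t = ℓⁱ_t(Xⁱ_t, W̃ⁱ_t)` and the strategy `g`. -/
noncomputable def trajP (g : StrategyP Z Y U) (ω : OmegaP T Z X W0 W WT) :
    (t : ℕ) → (Fin (t + 1) → Z) × (∀ i, Fin (t + 1) → X i) ×
      (∀ i, Fin (t + 1) → Y i) × (Fin (t + 1) → ∀ j, U j)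
  | 0 =>
    let zh : Fin 1 → Z := fun _ => ω.1
    let xh : ∀ i, Fin 1 → X i := fun i _ => ω.2.1 i
    let yh : ∀ i, Fin 1 → Y i := fun i _ =>
      ℓ i 0 (ω.2.1 i)
        (if h : 0 < T then ω.2.2.2.2 i ⟨0, h⟩ else Classical.arbitrary (WT i))
    ⟨zh, xh, yh, fun _ j => g j 0 zh (yh j) (fun s => s.elim0)⟩
  | t + 1 =>
    let prev := trajP g ω t
    let ucur := prev.2.2.2 (Fin.last t)
    let znew := f0 t (prev.1 (Fin.last t)) ucur
      (if h : t < T then ω.2.2.1 ⟨t, h⟩ else Classical.arbitrary W0)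
    let xnew : ∀ i, X i := fun i =>
      f i t (prev.1 (Fin.last t)) (prev.2.1 i (Fin.last t)) ucur
        (if h : t < T then ω.2.2.2.1 i ⟨t, h⟩ else Classical.arbitrary (W i))
    let ynew : ∀ i, Y i := fun i =>
      ℓ i (t + 1) (xnew i)
        (if h : t + 1 < T then ω.2.2.2.2 i ⟨t + 1, h⟩ else Classical.arbitrary (WT i))
    let zh : Fin (t + 2) → Z := Fin.snoc prev.1 znew
    let xh : ∀ i, Fin (t + 2) → X i := fun i => Fin.snoc (prev.2.1 i) (xnew i)
    let yh : ∀ i, Fin (t + 2) → Y i := fun i => Fin.snoc (prev.2.2.1 i) (ynew i)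
    ⟨zh, xh, yh, Fin.snoc prev.2.2.2 (fun j => g j (t + 1) zh (yh j) prev.2.2.2)⟩

/-- The shared state process `Z_t`. -/
noncomputable def ZpP (g : StrategyP Z Y U) (t : ℕ) (ω : OmegaP T Z X W0 W WT) : Z :=
  (trajP f0 f ℓ g ω t).1 (Fin.last t)

/-- The local state process `Xⁱ_t`. -/
noncomputable def XpP (g : StrategyP Z Y U) (i : Fin n) (t : ℕ) (ω : OmegaP T Z X W0 W WT) :
    X i :=
  (trajP f0 f ℓ g ω t).2.1 i (Fin.last t)

/-- The observation process `Yⁱ_t`. -/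
noncomputable def YpP (g : StrategyP Z Y U) (i : Fin n) (t : ℕ) (ω : OmegaP T Z X W0 W WT) :
    Y i :=
  (trajP f0 f ℓ g ω t).2.2.1 i (Fin.last t)

/-- The action process `Uⁱ_t`. -/
noncomputable def UpP (g : StrategyP Z Y U) (i : Fin n) (t : ℕ) (ω : OmegaP T Z X W0 W WT) :
    U i :=
  (trajP f0 f ℓ g ω t).2.2.2 (Fin.last t) i

/-- Probability of an event under a weight function. -/
noncomputable def Pr {Ω : Type} [Fintype Ω] (μ : Ω → ℝ) (A : Ω → Prop) : ℝ :=
  ∑ ω : Ω, if A ω then μ ω else 0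

/-- Conditional probability `P(A | B)`. -/
noncomputable def CondPr {Ω : Type} [Fintype Ω] (μ : Ω → ℝ) (A B : Ω → Prop) : ℝ :=
  Pr μ (fun ω => A ω ∧ B ω) / Pr μ B

/-- Conditional expectation `E[h | B]`. -/
noncomputable def CondExp {Ω : Type} [Fintype Ω] (μ : Ω → ℝ) (h : Ω → ℝ) (B : Ω → Prop) : ℝ :=
  (∑ ω : Ω, if B ω then μ ω * h ω else 0) / Pr μ B

/-- The expected total cost `J(g) = E[∑_{t=1}^T c_t(Z_t, X_t, U_t)]`. -/
noncomputable def JP (c : ℕ → Z → (∀ i, X i) → (∀ i, U i) → ℝ)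
    (μ : OmegaP T Z X W0 W WT → ℝ) (g : StrategyP Z Y U) : ℝ :=
  ∑ ω : OmegaP T Z X W0 W WT, μ ω *
    ∑ t ∈ Finset.range T,
      c t (ZpP f0 f ℓ g t ω) (fun i => XpP f0 f ℓ g i t ω) (fun i => UpP f0 f ℓ g i t ω)

/-- The posterior belief `Ξⁱ_t` of control station `i` on its local state `Xⁱ_t` given all of
its information `(Yⁱ_{1:t}, Z_{1:t}, U_{1:t-1})`, realized at the sample point `ω`. -/
noncomputable def XiBelief (μ : OmegaP T Z X W0 W WT → ℝ) (g : StrategyP Z Y U) (i : Fin n)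
    (t : ℕ) (ω : OmegaP T Z X W0 W WT) : X i → ℝ := fun x =>
  CondPr μ (fun ω' => XpP f0 f ℓ g i t ω' = x)
    (fun ω' => (∀ s ≤ t, YpP f0 f ℓ g i s ω' = YpP f0 f ℓ g i s ω) ∧
      (∀ s ≤ t, ZpP f0 f ℓ g s ω' = ZpP f0 f ℓ g s ω) ∧
      (∀ s < t, ∀ j, UpP f0 f ℓ g j s ω' = UpP f0 f ℓ g j s ω))


set_option linter.unusedSectionVars false

/-! ### Averaging over fibres and exchange of samples -/

section Averaging

variable {Ω : Type} [Fintype Ω]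

theorem condPr_eq_condExp (μ : Ω → ℝ) (A B : Ω → Prop) :
    CondPr μ A B = CondExp μ (fun ω => if A ω then 1 else 0) B := by
  unfold CondPr CondExp Pr
  congr 1
  refine Finset.sum_congr rfl fun ω _ => ?_
  by_cases hA : A ω <;> by_cases hB : B ω <;> simp [hA, hB]

theorem pr_pos {μ : Ω → ℝ} (hμ : ∀ ω, 0 ≤ μ ω) {A : Ω → Prop} {ω : Ω} (hA : A ω)
    (hω : μ ω ≠ 0) : 0 < Pr μ A := by
  refine Finset.sum_pos' (fun ω' _ => ?_) ⟨ω, Finset.mem_univ _, ?_⟩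
  · split_ifs
    · exact hμ ω'
    · exact le_rfl
  · rw [if_pos hA]
    exact lt_of_le_of_ne (hμ ω) (Ne.symm hω)

theorem exists_of_pr_pos {μ : Ω → ℝ} {A : Ω → Prop} (h : 0 < Pr μ A) :
    ∃ ω, A ω ∧ μ ω ≠ 0 := by
  by_contra! hcon
  refine absurd h (not_lt.2 (le_of_eq (Finset.sum_eq_zero fun ω _ => ?_)))
  split_ifs with hA
  · exact hcon ω hA
  · rfl

/-- Tower property: if the event `E` is a union of fibres of `I` and `h` has the same average `K`
on every fibre inside `E` that carries mass, then `h` has average `K` on `E`. -/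
theorem condExp_eq_of_fibers {ι : Type} [Fintype ι] {μ : Ω → ℝ}
    (I : Ω → ι) (h : Ω → ℝ) (E : Ω → Prop) (hE : ∀ ω ω', I ω' = I ω → E ω → E ω') (K : ℝ)
    (hK : ∀ ω, E ω → μ ω ≠ 0 →
      (∑ ω', if I ω' = I ω then μ ω' * h ω' else 0) = K * Pr μ (fun ω' => I ω' = I ω))
    (hpos : 0 < Pr μ E) : CondExp μ h E = K := by
  unfold CondExp
  rw [div_eq_iff hpos.ne']
  unfold Pr at *
  rw [Finset.mul_sum, ← sub_eq_zero, ← Finset.sum_sub_distrib,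
    ← Finset.sum_fiberwise Finset.univ I]
  refine Finset.sum_eq_zero fun a _ => ?_
  rw [Finset.sum_filter]
  by_cases hex : ∃ ω, I ω = a ∧ E ω ∧ μ ω ≠ 0
  · obtain ⟨ω, rfl, hEω, hω⟩ := hex
    have hKω := sub_eq_zero.2 (hK ω hEω hω)
    rw [Finset.mul_sum, ← Finset.sum_sub_distrib] at hKω
    refine Eq.trans ?_ hKω
    refine Finset.sum_congr rfl fun ω' _ => ?_
    by_cases h1 : I ω' = I ω
    · simp [h1, hE ω ω' h1 hEω]
    · simp [h1]
  · push Not at hex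
    refine Finset.sum_eq_zero fun ω _ => ?_
    by_cases h1 : I ω = a
    · by_cases h2 : E ω
      · simp [h1, h2, hex ω h1 h2]
      · simp [h2]
    · simp [h1]

/-- If `σ(ω, ω')` swaps two samples while carrying `A × B` onto `B × A`, preserving the product
weight there and turning `h` at the first coordinate into `k`, then the weighted sums satisfy
the corresponding cross-multiplied identity. -/
theorem sum_exchange {μ : Ω → ℝ} (σ : Ω → Ω → Ω)
    (hσ : ∀ ω ω', σ (σ ω ω') (σ ω' ω) = ω) (A B : Ω → Prop)
    (hAB : ∀ ω ω', A ω → B ω' → B (σ ω ω') ∧ A (σ ω' ω))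
    (hBA : ∀ ω ω', B ω → A ω' → A (σ ω ω') ∧ B (σ ω' ω))
    (hw : ∀ ω ω', A ω → B ω' → μ (σ ω ω') * μ (σ ω' ω) = μ ω * μ ω')
    (h k : Ω → ℝ)
    (hk : ∀ ω ω', A ω → B ω' → μ ω ≠ 0 → μ (σ ω ω') ≠ 0 → h ω = k (σ ω ω')) :
    (∑ ω, if A ω then μ ω * h ω else 0) * Pr μ B =
      (∑ ω, if B ω then μ ω * k ω else 0) * Pr μ A := by
  have hinv : Function.Involutive (fun p : Ω × Ω => (σ p.1 p.2, σ p.2 p.1)) := fun p =>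
    Prod.ext (hσ p.1 p.2) (hσ p.2 p.1)
  unfold Pr
  rw [Finset.sum_mul_sum, Finset.sum_mul_sum, ← Fintype.sum_prod_type', ← Fintype.sum_prod_type',
    ← Equiv.sum_comp hinv.toPerm
      (fun p : Ω × Ω => (if B p.1 then μ p.1 * k p.1 else 0) * (if A p.2 then μ p.2 else 0))]
  refine Finset.sum_congr rfl fun p _ => ?_
  obtain ⟨ω, ω'⟩ := p
  change _ = (if B (σ ω ω') then μ (σ ω ω') * k (σ ω ω') else 0) *
    (if A (σ ω' ω) then μ (σ ω' ω) else 0)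
  by_cases hc : A ω ∧ B ω'
  · obtain ⟨hA, hB⟩ := hc
    obtain ⟨h1, h2⟩ := hAB ω ω' hA hB
    rw [if_pos hA, if_pos hB, if_pos h1, if_pos h2]
    have hww := hw ω ω' hA hB
    by_cases h0 : μ ω * μ ω' = 0
    · calc μ ω * h ω * μ ω' = (μ ω * μ ω') * h ω := by ring
        _ = (μ (σ ω ω') * μ (σ ω' ω)) * k (σ ω ω') := by rw [hww, h0]; ring
        _ = _ := by ring
    · have h3 : μ (σ ω ω') ≠ 0 := by
        intro h; rw [h, zero_mul] at hww; exact h0 hww.symm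
      rw [hk ω ω' hA hB (left_ne_zero_of_mul h0) h3]
      linear_combination (-k (σ ω ω')) * hww
  · have hc' : ¬ (B (σ ω ω') ∧ A (σ ω' ω)) := by
      rintro ⟨h1, h2⟩
      have h3 := hBA _ _ h1 h2
      rw [hσ, hσ] at h3
      exact hc h3
    have e1 : ∀ a b : ℝ, (if A ω then a else 0) * (if B ω' then b else 0) = 0 := by
      intro a b
      by_cases hA : A ω
      · have hB : ¬ B ω' := fun hB => hc ⟨hA, hB⟩
        simp [hB]
      · simp [hA]
    have e2 : ∀ a b : ℝ,
        (if B (σ ω ω') then a else 0) * (if A (σ ω' ω) then b else 0) = 0 := by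
      intro a b
      by_cases hB : B (σ ω ω')
      · have hA : ¬ A (σ ω' ω) := fun hA => hc' ⟨hB, hA⟩
        simp [hA]
      · simp [hB]
    rw [e1, e2]

end Averaging

/-! ### The product weight and transplantation of local pasts -/

theorem weightP_nonneg (PZ : Z → ℝ) (PX : ∀ i, Z → X i → ℝ) (PW0 : W0 → ℝ)
    (PW : ∀ i, W i → ℝ) (PWT : ∀ i, WT i → ℝ)
    (hPZ : IsLaw PZ) (hPX : ∀ i z, IsLaw (PX i z))
    (hPW0 : IsLaw PW0) (hPW : ∀ i, IsLaw (PW i)) (hPWT : ∀ i, IsLaw (PWT i))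
    (ω : OmegaP T Z X W0 W WT) : 0 ≤ weightP PZ PX PW0 PW PWT ω := by
  unfold weightP
  have h1 := hPZ.1 ω.1
  have h2 : 0 ≤ ∏ i, PX i ω.1 (ω.2.1 i) := Finset.prod_nonneg fun i _ => (hPX i _).1 _
  have h3 : 0 ≤ ∏ t, PW0 (ω.2.2.1 t) := Finset.prod_nonneg fun i _ => hPW0.1 _
  have h4 : 0 ≤ ∏ i, ∏ t, PW i (ω.2.2.2.1 i t) :=
    Finset.prod_nonneg fun i _ => Finset.prod_nonneg fun t _ => (hPW i).1 _
  have h5 : 0 ≤ ∏ i, ∏ t, PWT i (ω.2.2.2.2 i t) :=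
    Finset.prod_nonneg fun i _ => Finset.prod_nonneg fun t _ => (hPWT i).1 _
  positivity

/-- The sample point obtained from `ω` by replacing the primitive variables that determine the
local past of station `i` up to time `t`, namely `Xⁱ₁`, the plant noises `Wⁱ_s` with `s < t` and the
observation noises `W̃ⁱ_s` with `s ≤ t`, by those of `ω'`. -/
def mixP (i : Fin n) (t : ℕ) (ω ω' : OmegaP T Z X W0 W WT) : OmegaP T Z X W0 W WT :=
  (ω.1, fun j => if j = i then ω'.2.1 j else ω.2.1 j, ω.2.2.1,
    fun j s => if j = i ∧ s.1 < t then ω'.2.2.2.1 j s else ω.2.2.2.1 j s,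
    fun j s => if j = i ∧ s.1 ≤ t then ω'.2.2.2.2 j s else ω.2.2.2.2 j s)

theorem mixP_mixP (i : Fin n) (t : ℕ) (ω ω' : OmegaP T Z X W0 W WT) :
    mixP i t (mixP i t ω ω') (mixP i t ω' ω) = ω := by
  obtain ⟨a, b, c, d, e⟩ := ω
  simp only [mixP, Prod.mk.injEq, true_and]
  refine ⟨?_, ?_, ?_⟩
  · funext j; split_ifs <;> rfl
  · funext j s; split_ifs <;> rfl
  · funext j s; split_ifs <;> rfl

theorem weightP_mixP (PZ : Z → ℝ) (PX : ∀ i, Z → X i → ℝ) (PW0 : W0 → ℝ)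
    (PW : ∀ i, W i → ℝ) (PWT : ∀ i, WT i → ℝ) (i : Fin n) (t : ℕ)
    (ω ω' : OmegaP T Z X W0 W WT) (h : ω.1 = ω'.1) :
    weightP PZ PX PW0 PW PWT (mixP i t ω ω') * weightP PZ PX PW0 PW PWT (mixP i t ω' ω) =
      weightP PZ PX PW0 PW PWT ω * weightP PZ PX PW0 PW PWT ω' := by
  have e1 : (∏ j, PX j ω'.1 ((mixP i t ω ω').2.1 j)) * (∏ j, PX j ω'.1 ((mixP i t ω' ω).2.1 j)) =
      (∏ j, PX j ω'.1 (ω.2.1 j)) * (∏ j, PX j ω'.1 (ω'.2.1 j)) := by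
    rw [← Finset.prod_mul_distrib, ← Finset.prod_mul_distrib]
    refine Finset.prod_congr rfl fun j _ => ?_
    simp only [mixP]
    split_ifs
    · exact mul_comm _ _
    · rfl
  have e2 : (∏ j, ∏ s, PW j ((mixP i t ω ω').2.2.2.1 j s)) *
        (∏ j, ∏ s, PW j ((mixP i t ω' ω).2.2.2.1 j s)) =
      (∏ j, ∏ s, PW j (ω.2.2.2.1 j s)) * (∏ j, ∏ s, PW j (ω'.2.2.2.1 j s)) := by
    simp only [← Finset.prod_mul_distrib]
    refine Finset.prod_congr rfl fun j _ => Finset.prod_congr rfl fun s _ => ?_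
    simp only [mixP]
    split_ifs
    · exact mul_comm _ _
    · rfl
  have e3 : (∏ j, ∏ s, PWT j ((mixP i t ω ω').2.2.2.2 j s)) *
        (∏ j, ∏ s, PWT j ((mixP i t ω' ω).2.2.2.2 j s)) =
      (∏ j, ∏ s, PWT j (ω.2.2.2.2 j s)) * (∏ j, ∏ s, PWT j (ω'.2.2.2.2 j s)) := by
    simp only [← Finset.prod_mul_distrib]
    refine Finset.prod_congr rfl fun j _ => Finset.prod_congr rfl fun s _ => ?_
    simp only [mixP]
    split_ifs
    · exact mul_comm _ _
    · rfl
  have z1 : (mixP i t ω ω').1 = ω'.1 := h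
  have z2 : (mixP i t ω' ω).1 = ω'.1 := rfl
  have z3 : (mixP i t ω ω').2.2.1 = ω.2.2.1 := rfl
  have z4 : (mixP i t ω' ω).2.2.1 = ω'.2.2.1 := rfl
  unfold weightP
  rw [z1, z2, z3, z4, h]
  calc _ = (PZ ω'.1 * PZ ω'.1) * ((∏ t, PW0 (ω.2.2.1 t)) * (∏ t, PW0 (ω'.2.2.1 t))) *
        ((∏ j, PX j ω'.1 ((mixP i t ω ω').2.1 j)) * (∏ j, PX j ω'.1 ((mixP i t ω' ω).2.1 j))) *
        ((∏ j, ∏ s, PW j ((mixP i t ω ω').2.2.2.1 j s)) *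
          (∏ j, ∏ s, PW j ((mixP i t ω' ω).2.2.2.1 j s))) *
        ((∏ j, ∏ s, PWT j ((mixP i t ω ω').2.2.2.2 j s)) *
          (∏ j, ∏ s, PWT j ((mixP i t ω' ω).2.2.2.2 j s))) := by ring
    _ = _ := by rw [e1, e2, e3]; ring

/-! ### Closed-loop trajectories -/

section Dynamics

variable (g : StrategyP Z Y U)

theorem trajP_fst (ω : OmegaP T Z X W0 W WT) (t : ℕ) :
    (trajP f0 f ℓ g ω t).1 = fun s : Fin (t + 1) => ZpP f0 f ℓ g s ω := by
  induction t with
  | zero => funext s; rw [Fin.fin_one_eq_zero s]; rfl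
  | succ t ih =>
    funext s
    refine Fin.lastCases rfl (fun r => ?_) s
    simp only [trajP, Fin.snoc_castSucc, ih, Fin.val_castSucc]

theorem trajP_obs (ω : OmegaP T Z X W0 W WT) (t : ℕ) (i : Fin n) :
    (trajP f0 f ℓ g ω t).2.2.1 i = fun s : Fin (t + 1) => YpP f0 f ℓ g i s ω := by
  induction t with
  | zero => funext s; rw [Fin.fin_one_eq_zero s]; rfl
  | succ t ih =>
    funext s
    refine Fin.lastCases rfl (fun r => ?_) s
    simp only [trajP, Fin.snoc_castSucc, ih, Fin.val_castSucc]

theorem trajP_act (ω : OmegaP T Z X W0 W WT) (t : ℕ) :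
    (trajP f0 f ℓ g ω t).2.2.2 = fun (s : Fin (t + 1)) j => UpP f0 f ℓ g j s ω := by
  induction t with
  | zero => funext s; rw [Fin.fin_one_eq_zero s]; rfl
  | succ t ih =>
    funext s
    refine Fin.lastCases rfl (fun r => ?_) s
    simp only [trajP, Fin.snoc_castSucc, ih, Fin.val_castSucc]

theorem UpP_eq (ω : OmegaP T Z X W0 W WT) (t : ℕ) (j : Fin n) :
    UpP f0 f ℓ g j t ω = g j t (fun s : Fin (t + 1) => ZpP f0 f ℓ g s ω)
      (fun s : Fin (t + 1) => YpP f0 f ℓ g j s ω)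
      (fun (s : Fin t) k => UpP f0 f ℓ g k s ω) := by
  rw [← trajP_fst, ← trajP_obs]
  cases t with
  | zero =>
    have : (fun (s : Fin 0) k => UpP f0 f ℓ g k s ω) = fun s => s.elim0 := by
      funext s; exact s.elim0
    rw [this]; rfl
  | succ t =>
    rw [← trajP_act]
    simp only [UpP, trajP, Fin.snoc_last]

theorem ZpP_succ (ω : OmegaP T Z X W0 W WT) (t : ℕ) :
    ZpP f0 f ℓ g (t + 1) ω = f0 t (ZpP f0 f ℓ g t ω) (fun j => UpP f0 f ℓ g j t ω)
      (if h : t < T then ω.2.2.1 ⟨t, h⟩ else Classical.arbitrary W0) := by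
  simp only [ZpP, trajP, Fin.snoc_last]; rfl

theorem XpP_succ (ω : OmegaP T Z X W0 W WT) (t : ℕ) (i : Fin n) :
    XpP f0 f ℓ g i (t + 1) ω =
      f i t (ZpP f0 f ℓ g t ω) (XpP f0 f ℓ g i t ω) (fun j => UpP f0 f ℓ g j t ω)
      (if h : t < T then ω.2.2.2.1 i ⟨t, h⟩ else Classical.arbitrary (W i)) := by
  simp only [XpP, trajP, Fin.snoc_last]; rfl

theorem YpP_eq (ω : OmegaP T Z X W0 W WT) (t : ℕ) (i : Fin n) :
    YpP f0 f ℓ g i t ω = ℓ i t (XpP f0 f ℓ g i t ω)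
      (if h : t < T then ω.2.2.2.2 i ⟨t, h⟩ else Classical.arbitrary (WT i)) := by
  cases t with
  | zero => rfl
  | succ t => simp only [YpP, XpP, trajP, Fin.snoc_last]

/-- Equality of the information `(Yⁱ_{1:t}, Z_{1:t}, U_{1:t-1})` of station `i` at two sample
points, in the form in which it enters `XiBelief`. -/
def SameInfo (i : Fin n) (t : ℕ) (ω ω' : OmegaP T Z X W0 W WT) : Prop :=
  (∀ s ≤ t, YpP f0 f ℓ g i s ω' = YpP f0 f ℓ g i s ω) ∧
    (∀ s ≤ t, ZpP f0 f ℓ g s ω' = ZpP f0 f ℓ g s ω) ∧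
    (∀ s < t, ∀ j, UpP f0 f ℓ g j s ω' = UpP f0 f ℓ g j s ω)

/-- Equality of the common history `(Z_{1:t}, U_{1:t-1})` at two sample points. -/
def SameCommon (t : ℕ) (ω ω' : OmegaP T Z X W0 W WT) : Prop :=
  (∀ s ≤ t, ZpP f0 f ℓ g s ω' = ZpP f0 f ℓ g s ω) ∧
    (∀ s < t, ∀ j, UpP f0 f ℓ g j s ω' = UpP f0 f ℓ g j s ω)

theorem UpP_congr {i : Fin n} {t : ℕ} {ω ω' : OmegaP T Z X W0 W WT}
    (hZ : ∀ s ≤ t, ZpP f0 f ℓ g s ω' = ZpP f0 f ℓ g s ω)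
    (hY : ∀ s ≤ t, YpP f0 f ℓ g i s ω' = YpP f0 f ℓ g i s ω)
    (hU : ∀ s < t, ∀ j, UpP f0 f ℓ g j s ω' = UpP f0 f ℓ g j s ω) :
    UpP f0 f ℓ g i t ω' = UpP f0 f ℓ g i t ω := by
  rw [UpP_eq, UpP_eq f0 f ℓ g ω]
  congr 1
  · funext s; exact hZ s (Nat.lt_succ_iff.1 s.2)
  · funext s; exact hY s (Nat.lt_succ_iff.1 s.2)
  · funext s j; exact hU s s.2 j

theorem SameInfo.symm {i : Fin n} {t : ℕ} {ω ω' : OmegaP T Z X W0 W WT}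
    (h : SameInfo f0 f ℓ g i t ω ω') : SameInfo f0 f ℓ g i t ω' ω :=
  ⟨fun s hs => (h.1 s hs).symm, fun s hs => (h.2.1 s hs).symm, fun s hs j => (h.2.2 s hs j).symm⟩

theorem SameInfo.trans {i : Fin n} {t : ℕ} {ω ω' ω'' : OmegaP T Z X W0 W WT}
    (h : SameInfo f0 f ℓ g i t ω ω') (h' : SameInfo f0 f ℓ g i t ω' ω'') :
    SameInfo f0 f ℓ g i t ω ω'' :=
  ⟨fun s hs => (h'.1 s hs).trans (h.1 s hs), fun s hs => (h'.2.1 s hs).trans (h.2.1 s hs),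
    fun s hs j => (h'.2.2 s hs j).trans (h.2.2 s hs j)⟩

theorem SameInfo.mono {i : Fin n} {r t : ℕ} (hr : r ≤ t) {ω ω' : OmegaP T Z X W0 W WT}
    (h : SameInfo f0 f ℓ g i t ω ω') : SameInfo f0 f ℓ g i r ω ω' :=
  ⟨fun s hs => h.1 s (hs.trans hr), fun s hs => h.2.1 s (hs.trans hr),
    fun s hs => h.2.2 s (hs.trans_le hr)⟩

theorem SameInfo.UpP {i : Fin n} {t : ℕ} {ω ω' : OmegaP T Z X W0 W WT}
    (h : SameInfo f0 f ℓ g i t ω ω') : UpP f0 f ℓ g i t ω' = UpP f0 f ℓ g i t ω :=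
  UpP_congr f0 f ℓ g h.2.1 h.1 h.2.2

theorem sameInfo_succ_iff {i : Fin n} {t : ℕ} {ω ω' : OmegaP T Z X W0 W WT} :
    SameInfo f0 f ℓ g i (t + 1) ω ω' ↔ SameInfo f0 f ℓ g i t ω ω' ∧
      YpP f0 f ℓ g i (t + 1) ω' = YpP f0 f ℓ g i (t + 1) ω ∧
      ZpP f0 f ℓ g (t + 1) ω' = ZpP f0 f ℓ g (t + 1) ω ∧
      ∀ j, ControlSharing.UpP f0 f ℓ g j t ω' = ControlSharing.UpP f0 f ℓ g j t ω := by
  constructor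
  · intro h
    exact ⟨h.mono f0 f ℓ g t.le_succ, h.1 _ le_rfl, h.2.1 _ le_rfl, h.2.2 t t.lt_succ_self⟩
  · rintro ⟨h, h1, h2, h3⟩
    refine ⟨fun s hs => ?_, fun s hs => ?_, fun s hs => ?_⟩
    · rcases Nat.le_succ_iff.1 hs with hs | rfl
      exacts [h.1 s hs, h1]
    · rcases Nat.le_succ_iff.1 hs with hs | rfl
      exacts [h.2.1 s hs, h2]
    · rcases Nat.lt_succ_iff_lt_or_eq.1 hs with hs | rfl
      exacts [h.2.2 s hs, h3]

theorem XiBelief_congr (μ : OmegaP T Z X W0 W WT → ℝ) {i : Fin n} {t : ℕ}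
    {ω ω' : OmegaP T Z X W0 W WT} (h : SameInfo f0 f ℓ g i t ω ω') :
    XiBelief f0 f ℓ μ g i t ω' = XiBelief f0 f ℓ μ g i t ω := by
  have : SameInfo f0 f ℓ g i t ω' = SameInfo f0 f ℓ g i t ω := by
    funext ω''
    exact propext ⟨h.trans f0 f ℓ g, (h.symm f0 f ℓ g).trans f0 f ℓ g⟩
  funext x
  change CondPr μ _ (SameInfo f0 f ℓ g i t ω') = CondPr μ _ (SameInfo f0 f ℓ g i t ω)
  rw [this]

/-! ### Transplantation along trajectories -/

/-- Along two samples with a common history, transplanting the local past of station `i` from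
`ω'` into `ω` leaves the common history and all other stations as in `ω`, and makes the local
trajectory of station `i` that of `ω'`: the other stations act on their own observations and
the common history only, and station `i` repeats the actions it takes under `ω'`, which coincide
with those under `ω`. -/
theorem mixP_traj (i : Fin n) (t : ℕ) (ω ω' : OmegaP T Z X W0 W WT)
    (h : SameCommon f0 f ℓ g t ω ω') (s : ℕ) (hs : s ≤ t) :
    (∀ r ≤ s, ZpP f0 f ℓ g r (mixP i t ω ω') = ZpP f0 f ℓ g r ω) ∧
    (∀ r < s, ∀ j, UpP f0 f ℓ g j r (mixP i t ω ω') = UpP f0 f ℓ g j r ω) ∧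
    (∀ j, j ≠ i → ∀ r ≤ s, XpP f0 f ℓ g j r (mixP i t ω ω') = XpP f0 f ℓ g j r ω ∧
      YpP f0 f ℓ g j r (mixP i t ω ω') = YpP f0 f ℓ g j r ω) ∧
    (∀ r ≤ s, XpP f0 f ℓ g i r (mixP i t ω ω') = XpP f0 f ℓ g i r ω' ∧
      YpP f0 f ℓ g i r (mixP i t ω ω') = YpP f0 f ℓ g i r ω') := by
  induction s with
  | zero =>
    have hX : ∀ j, j ≠ i → XpP f0 f ℓ g j 0 (mixP i t ω ω') = XpP f0 f ℓ g j 0 ω := fun j hj => by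
      change (if j = i then ω'.2.1 j else ω.2.1 j) = ω.2.1 j
      rw [if_neg hj]
    have hXi : XpP f0 f ℓ g i 0 (mixP i t ω ω') = XpP f0 f ℓ g i 0 ω' := by
      change (if i = i then ω'.2.1 i else ω.2.1 i) = ω'.2.1 i
      rw [if_pos rfl]
    refine ⟨?_, ?_, ?_, ?_⟩
    · intro r hr
      obtain rfl := Nat.le_zero.1 hr
      rfl
    · intro r hr
      exact absurd hr (Nat.not_lt_zero r)
    · intro j hj r hr
      obtain rfl := Nat.le_zero.1 hr
      refine ⟨hX j hj, ?_⟩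
      rw [YpP_eq, YpP_eq f0 f ℓ g ω, hX j hj]
      simp [mixP, hj]
    · intro r hr
      obtain rfl := Nat.le_zero.1 hr
      refine ⟨hXi, ?_⟩
      rw [YpP_eq, YpP_eq f0 f ℓ g ω', hXi]
      simp [mixP]
  | succ s ih =>
    obtain ⟨iZ, iU, iO, iI⟩ := ih (Nat.le_of_succ_le hs)
    have hst : s < t := hs
    have hU : ∀ j, UpP f0 f ℓ g j s (mixP i t ω ω') = UpP f0 f ℓ g j s ω := by
      intro j
      by_cases hj : j = i
      · subst hj
        rw [← h.2 s hst j]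
        exact UpP_congr f0 f ℓ g
          (fun r hr => (iZ r hr).trans (h.1 r (hr.trans hst.le)).symm)
          (fun r hr => (iI r hr).2)
          (fun r hr k => (iU r hr k).trans (h.2 r (hr.trans hst) k).symm)
      · exact UpP_congr f0 f ℓ g iZ (fun r hr => (iO j hj r hr).2) iU
    have hZ : ZpP f0 f ℓ g (s + 1) (mixP i t ω ω') = ZpP f0 f ℓ g (s + 1) ω := by
      rw [ZpP_succ, ZpP_succ f0 f ℓ g ω, iZ s le_rfl, funext hU]
      rfl
    have hX : ∀ j, j ≠ i →
        XpP f0 f ℓ g j (s + 1) (mixP i t ω ω') = XpP f0 f ℓ g j (s + 1) ω := by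
      intro j hj
      rw [XpP_succ, XpP_succ f0 f ℓ g ω, iZ s le_rfl, funext hU, (iO j hj s le_rfl).1]
      simp [mixP, hj]
    have hXi : XpP f0 f ℓ g i (s + 1) (mixP i t ω ω') = XpP f0 f ℓ g i (s + 1) ω' := by
      rw [XpP_succ, XpP_succ f0 f ℓ g ω', iZ s le_rfl, funext hU, (iI s le_rfl).1,
        h.1 s hst.le, funext (h.2 s hst)]
      simp [mixP, hst]
    refine ⟨?_, ?_, ?_, ?_⟩
    · intro r hr
      rcases Nat.le_succ_iff.1 hr with hr | rfl
      exacts [iZ r hr, hZ]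
    · intro r hr
      rcases Nat.lt_succ_iff_lt_or_eq.1 hr with hr | rfl
      exacts [iU r hr, hU]
    · intro j hj r hr
      rcases Nat.le_succ_iff.1 hr with hr | rfl
      · exact iO j hj r hr
      · refine ⟨hX j hj, ?_⟩
        rw [YpP_eq, YpP_eq f0 f ℓ g ω, hX j hj]
        simp [mixP, hj]
    · intro r hr
      rcases Nat.le_succ_iff.1 hr with hr | rfl
      · exact iI r hr
      · refine ⟨hXi, ?_⟩
        rw [YpP_eq, YpP_eq f0 f ℓ g ω', hXi]
        have : s + 1 ≤ t := hs
        simp [mixP, this]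

/-- If moreover station `i` has the same current state and takes the same current action under
both samples, then the transplanted sample evolves to time `t + 1` exactly as `ω` does, because
the noises `W⁰_t`, `Wⁱ_t` and `W̃ⁱ_{t+1}` are those of `ω`. -/
theorem mixP_next (i : Fin n) (t : ℕ) (ω ω' : OmegaP T Z X W0 W WT)
    (h : SameCommon f0 f ℓ g t ω ω') (hU : UpP f0 f ℓ g i t ω' = UpP f0 f ℓ g i t ω)
    (hX : XpP f0 f ℓ g i t ω' = XpP f0 f ℓ g i t ω) :
    (∀ j, UpP f0 f ℓ g j t (mixP i t ω ω') = UpP f0 f ℓ g j t ω) ∧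
    (∀ j, XpP f0 f ℓ g j t (mixP i t ω ω') = XpP f0 f ℓ g j t ω) ∧
    ZpP f0 f ℓ g (t + 1) (mixP i t ω ω') = ZpP f0 f ℓ g (t + 1) ω ∧
    XpP f0 f ℓ g i (t + 1) (mixP i t ω ω') = XpP f0 f ℓ g i (t + 1) ω ∧
    YpP f0 f ℓ g i (t + 1) (mixP i t ω ω') = YpP f0 f ℓ g i (t + 1) ω := by
  obtain ⟨iZ, iU, iO, iI⟩ := mixP_traj f0 f ℓ g i t ω ω' h t le_rfl
  have hU' : ∀ j, UpP f0 f ℓ g j t (mixP i t ω ω') = UpP f0 f ℓ g j t ω := by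
    intro j
    by_cases hj : j = i
    · subst hj
      rw [← hU]
      exact UpP_congr f0 f ℓ g
        (fun r hr => (iZ r hr).trans (h.1 r hr).symm)
        (fun r hr => (iI r hr).2)
        (fun r hr k => (iU r hr k).trans (h.2 r hr k).symm)
    · exact UpP_congr f0 f ℓ g iZ (fun r hr => (iO j hj r hr).2) iU
  have hX' : ∀ j, XpP f0 f ℓ g j t (mixP i t ω ω') = XpP f0 f ℓ g j t ω := by
    intro j
    by_cases hj : j = i
    · subst hj
      exact (iI t le_rfl).1.trans hX
    · exact (iO j hj t le_rfl).1
  have hX1 : XpP f0 f ℓ g i (t + 1) (mixP i t ω ω') = XpP f0 f ℓ g i (t + 1) ω := by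
    rw [XpP_succ, XpP_succ f0 f ℓ g ω, iZ t le_rfl, funext hU', hX' i]
    simp [mixP]
  refine ⟨hU', hX', ?_, hX1, ?_⟩
  · rw [ZpP_succ, ZpP_succ f0 f ℓ g ω, iZ t le_rfl, funext hU']
    rfl
  · rw [YpP_eq, YpP_eq f0 f ℓ g ω, hX1]
    simp [mixP]

/-- The event that the information of station `i` at time `t` is as under `ω₀` and its local state
is `x`. -/
def StateInfo (i : Fin n) (t : ℕ) (x : X i) (ω₀ ω : OmegaP T Z X W0 W WT) : Prop :=
  XpP f0 f ℓ g i t ω = x ∧ SameInfo f0 f ℓ g i t ω₀ ω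

/-- If `ω₁, ω₂` give station `i` information values with a common history, then transplanting
carries `{Xⁱ_t = x, info as ω₁} × {Xⁱ_t = x, info as ω₂}` into the same product with the two
factors interchanged. -/
theorem mixP_mem {i : Fin n} {t : ℕ} {ω₁ ω₂ ω ω' : OmegaP T Z X W0 W WT} {x : X i}
    (h : SameCommon f0 f ℓ g t ω₁ ω₂)
    (hω : StateInfo f0 f ℓ g i t x ω₁ ω)
    (hω' : StateInfo f0 f ℓ g i t x ω₂ ω') :
    SameCommon f0 f ℓ g t ω ω' ∧
    StateInfo f0 f ℓ g i t x ω₂ (mixP i t ω ω') := by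
  have hc : SameCommon f0 f ℓ g t ω ω' :=
    ⟨fun s hs => ((hω'.2.2.1 s hs).trans (h.1 s hs)).trans (hω.2.2.1 s hs).symm,
      fun s hs j => ((hω'.2.2.2 s hs j).trans (h.2 s hs j)).trans (hω.2.2.2 s hs j).symm⟩
  obtain ⟨iZ, iU, _, iI⟩ := mixP_traj f0 f ℓ g i t ω ω' hc t le_rfl
  refine ⟨hc, (iI t le_rfl).1.trans hω'.1, fun s hs => (iI s hs).2.trans (hω'.2.1 s hs),
    fun s hs => ?_, fun s hs j => ?_⟩
  · rw [iZ s hs, ← hc.1 s hs, hω'.2.2.1 s hs]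
  · rw [iU s hs, ← hc.2 s hs, hω'.2.2.2 s hs]

/-! ### Beliefs as sufficient statistics -/

theorem SameCommon.symm {t : ℕ} {ω ω' : OmegaP T Z X W0 W WT}
    (h : SameCommon f0 f ℓ g t ω ω') : SameCommon f0 f ℓ g t ω' ω :=
  ⟨fun s hs => (h.1 s hs).symm, fun s hs j => (h.2 s hs j).symm⟩

/-- Take two information values of station `i`, those of samples `ω₁`, `ω₂` of positive weight, with
the same common history and the same belief. If `h` and `k` are matched under transplantation of
the local past, the conditional expectation of `h` given the first equals that of `k` given the
second (in cross-multiplied form). -/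
theorem sum_atom_exchange (PZ : Z → ℝ) (PX : ∀ i, Z → X i → ℝ) (PW0 : W0 → ℝ)
    (PW : ∀ i, W i → ℝ) (PWT : ∀ i, WT i → ℝ)
    (hμ : ∀ ω : OmegaP T Z X W0 W WT, 0 ≤ weightP PZ PX PW0 PW PWT ω)
    {i : Fin n} {t : ℕ} {ω₁ ω₂ : OmegaP T Z X W0 W WT}
    (h1 : weightP PZ PX PW0 PW PWT ω₁ ≠ 0) (h2 : weightP PZ PX PW0 PW PWT ω₂ ≠ 0)
    (hc : SameCommon f0 f ℓ g t ω₁ ω₂)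
    (hξ : XiBelief f0 f ℓ (weightP PZ PX PW0 PW PWT) g i t ω₁ =
      XiBelief f0 f ℓ (weightP PZ PX PW0 PW PWT) g i t ω₂)
    (h k : OmegaP T Z X W0 W WT → ℝ)
    (hk : ∀ ω ω', SameInfo f0 f ℓ g i t ω₁ ω → SameInfo f0 f ℓ g i t ω₂ ω' →
      SameCommon f0 f ℓ g t ω ω' → XpP f0 f ℓ g i t ω' = XpP f0 f ℓ g i t ω →
      SameInfo f0 f ℓ g i t ω₂ (mixP i t ω ω') →
      weightP PZ PX PW0 PW PWT ω ≠ 0 → weightP PZ PX PW0 PW PWT (mixP i t ω ω') ≠ 0 →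
      h ω = k (mixP i t ω ω')) :
    (∑ ω, if SameInfo f0 f ℓ g i t ω₁ ω then weightP PZ PX PW0 PW PWT ω * h ω else 0) *
        Pr (weightP PZ PX PW0 PW PWT) (SameInfo f0 f ℓ g i t ω₂) =
      (∑ ω, if SameInfo f0 f ℓ g i t ω₂ ω then weightP PZ PX PW0 PW PWT ω * k ω else 0) *
        Pr (weightP PZ PX PW0 PW PWT) (SameInfo f0 f ℓ g i t ω₁) := by
  set μ : OmegaP T Z X W0 W WT → ℝ := weightP PZ PX PW0 PW PWT with hμdef
  have hself : ∀ ω : OmegaP T Z X W0 W WT, SameInfo f0 f ℓ g i t ω ω := fun ω =>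
    ⟨fun _ _ => rfl, fun _ _ => rfl, fun _ _ _ => rfl⟩
  have P1 : 0 < Pr μ (SameInfo f0 f ℓ g i t ω₁) := pr_pos hμ (hself ω₁) h1
  have P2 : 0 < Pr μ (SameInfo f0 f ℓ g i t ω₂) := pr_pos hμ (hself ω₂) h2
  have split : ∀ (ω₀ : OmegaP T Z X W0 W WT) (q : OmegaP T Z X W0 W WT → ℝ),
      (∑ ω, if SameInfo f0 f ℓ g i t ω₀ ω then μ ω * q ω else 0) =
      ∑ x, ∑ ω, if StateInfo f0 f ℓ g i t x ω₀ ω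
        then μ ω * q ω else 0 := by
    intro ω₀ q
    rw [Finset.sum_comm]
    refine Finset.sum_congr rfl fun ω _ => ?_
    rw [Finset.sum_eq_single (XpP f0 f ℓ g i t ω)]
    · simp [StateInfo]
    · intro b _ hb
      rw [if_neg fun hh => hb hh.1.symm]
    · intro hh; exact absurd (Finset.mem_univ _) hh
  rw [split ω₁ h, split ω₂ k, Finset.sum_mul, Finset.sum_mul]
  refine Finset.sum_congr rfl fun x _ => ?_
  have hswap := sum_exchange (μ := μ) (mixP i t) (mixP_mixP i t)
    (fun ω => StateInfo f0 f ℓ g i t x ω₁ ω)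
    (fun ω => StateInfo f0 f ℓ g i t x ω₂ ω)
    (fun ω ω' hA hB => ⟨(mixP_mem f0 f ℓ g hc hA hB).2,
      (mixP_mem f0 f ℓ g (hc.symm f0 f ℓ g) hB hA).2⟩)
    (fun ω ω' hB hA => ⟨(mixP_mem f0 f ℓ g (hc.symm f0 f ℓ g) hB hA).2,
      (mixP_mem f0 f ℓ g hc hA hB).2⟩)
    (fun ω ω' hA hB => weightP_mixP PZ PX PW0 PW PWT i t ω ω'
      ((mixP_mem f0 f ℓ g hc hA hB).1.1 0 (Nat.zero_le t)).symm)
    h k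
    (fun ω ω' hA hB hw hw' => hk ω ω' hA.2 hB.2 (mixP_mem f0 f ℓ g hc hA hB).1
      (hB.1.trans hA.1.symm) (mixP_mem f0 f ℓ g hc hA hB).2.2 hw hw')
  have hx : Pr μ (fun ω => StateInfo f0 f ℓ g i t x ω₁ ω) *
        Pr μ (SameInfo f0 f ℓ g i t ω₂) =
      Pr μ (fun ω => StateInfo f0 f ℓ g i t x ω₂ ω) *
        Pr μ (SameInfo f0 f ℓ g i t ω₁) :=
    (div_eq_div_iff P1.ne' P2.ne').1 (congrFun hξ x)
  -- An event of probability zero contributes nothing to a weighted sum.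
  have null : ∀ (A : OmegaP T Z X W0 W WT → Prop) (q : OmegaP T Z X W0 W WT → ℝ), Pr μ A = 0 →
      (∑ ω, if A ω then μ ω * q ω else 0) = 0 := by
    intro A q hA
    refine Finset.sum_eq_zero fun ω _ => ?_
    split_ifs with hAω
    · by_contra hne
      exact (pr_pos hμ hAω (left_ne_zero_of_mul hne)).ne' hA
    · rfl
  set p1 := Pr μ (fun ω => StateInfo f0 f ℓ g i t x ω₁ ω) with hp1
  set p2 := Pr μ (fun ω => StateInfo f0 f ℓ g i t x ω₂ ω) with hp2
  by_cases hz : p2 = 0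
  · have hz1 : p1 = 0 := by
      rw [hz, zero_mul] at hx
      exact (mul_eq_zero.1 hx).resolve_right P2.ne'
    rw [null _ h hz1, null _ k hz, zero_mul, zero_mul]
  · refine mul_right_cancel₀ hz ?_
    linear_combination (Pr μ (SameInfo f0 f ℓ g i t ω₂)) * hswap +
      (∑ ω, if StateInfo f0 f ℓ g i t x ω₂ ω then μ ω * k ω else 0) * hx

/-- The nonlinear filter: the next belief `Ξⁱ_{t+1}` is determined by `Ξⁱ_t`, the common history
`(Z_{1:t}, U_{1:t-1})`, and the new data `Yⁱ_{t+1}`, `Z_{t+1}`, `U_t`, on samples of positive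
weight. -/
theorem XiBelief_succ_congr (PZ : Z → ℝ) (PX : ∀ i, Z → X i → ℝ) (PW0 : W0 → ℝ)
    (PW : ∀ i, W i → ℝ) (PWT : ∀ i, WT i → ℝ)
    (hμ : ∀ ω : OmegaP T Z X W0 W WT, 0 ≤ weightP PZ PX PW0 PW PWT ω)
    {i : Fin n} {t : ℕ} {ω₁ ω₂ : OmegaP T Z X W0 W WT}
    (h1 : weightP PZ PX PW0 PW PWT ω₁ ≠ 0) (h2 : weightP PZ PX PW0 PW PWT ω₂ ≠ 0)
    (hc : SameCommon f0 f ℓ g t ω₁ ω₂)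
    (hξ : XiBelief f0 f ℓ (weightP PZ PX PW0 PW PWT) g i t ω₁ =
      XiBelief f0 f ℓ (weightP PZ PX PW0 PW PWT) g i t ω₂)
    (hY : YpP f0 f ℓ g i (t + 1) ω₂ = YpP f0 f ℓ g i (t + 1) ω₁)
    (hZ : ZpP f0 f ℓ g (t + 1) ω₂ = ZpP f0 f ℓ g (t + 1) ω₁)
    (hU : ∀ j, UpP f0 f ℓ g j t ω₂ = UpP f0 f ℓ g j t ω₁) :
    XiBelief f0 f ℓ (weightP PZ PX PW0 PW PWT) g i (t + 1) ω₁ =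
      XiBelief f0 f ℓ (weightP PZ PX PW0 PW PWT) g i (t + 1) ω₂ := by
  set μ : OmegaP T Z X W0 W WT → ℝ := weightP PZ PX PW0 PW PWT with hμdef
  have hself : ∀ (s : ℕ) (ω : OmegaP T Z X W0 W WT), SameInfo f0 f ℓ g i s ω ω := fun s ω =>
    ⟨fun _ _ => rfl, fun _ _ => rfl, fun _ _ _ => rfl⟩
  -- The same identity serves numerator and denominator of the belief, for `V` a condition on
  -- the next local state.
  have key : ∀ V : X i → Prop,
      Pr μ (fun ω => V (XpP f0 f ℓ g i (t + 1) ω) ∧ SameInfo f0 f ℓ g i (t + 1) ω₁ ω) *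
        Pr μ (SameInfo f0 f ℓ g i t ω₂) =
      Pr μ (fun ω => V (XpP f0 f ℓ g i (t + 1) ω) ∧ SameInfo f0 f ℓ g i (t + 1) ω₂ ω) *
        Pr μ (SameInfo f0 f ℓ g i t ω₁) := by
    intro V
    let D : OmegaP T Z X W0 W WT → OmegaP T Z X W0 W WT → Prop := fun ω₀ ω =>
      V (XpP f0 f ℓ g i (t + 1) ω) ∧ YpP f0 f ℓ g i (t + 1) ω = YpP f0 f ℓ g i (t + 1) ω₀ ∧
        ZpP f0 f ℓ g (t + 1) ω = ZpP f0 f ℓ g (t + 1) ω₀ ∧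
        ∀ j, UpP f0 f ℓ g j t ω = UpP f0 f ℓ g j t ω₀
    have conv : ∀ ω₀,
        Pr μ (fun ω => V (XpP f0 f ℓ g i (t + 1) ω) ∧ SameInfo f0 f ℓ g i (t + 1) ω₀ ω) =
        ∑ ω, if SameInfo f0 f ℓ g i t ω₀ ω then μ ω * (if D ω₀ ω then 1 else 0) else 0 := by
      intro ω₀
      refine Finset.sum_congr rfl fun ω _ => ?_
      have : (V (XpP f0 f ℓ g i (t + 1) ω) ∧ SameInfo f0 f ℓ g i (t + 1) ω₀ ω) ↔
          SameInfo f0 f ℓ g i t ω₀ ω ∧ D ω₀ ω := by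
        rw [sameInfo_succ_iff]
        simp only [D]
        tauto
      simp only [this]
      by_cases hA : SameInfo f0 f ℓ g i t ω₀ ω <;> by_cases hB : D ω₀ ω <;> simp [hA, hB]
    rw [conv, conv]
    refine sum_atom_exchange f0 f ℓ g PZ PX PW0 PW PWT hμ h1 h2 hc hξ _ _ ?_
    intro ω ω' hω hω' hcc hX _ _ _
    have hUi : UpP f0 f ℓ g i t ω' = UpP f0 f ℓ g i t ω := by
      rw [hω'.UpP, hω.UpP, hU]
    obtain ⟨nU, _, nZ, nX, nY⟩ := mixP_next f0 f ℓ g i t ω ω' hcc hUi hX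
    have : D ω₁ ω ↔ D ω₂ (mixP i t ω ω') := by
      simp only [D, nU, nZ, nX, nY, hY, hZ, hU]
    simp only [this]
  have den := key (fun _ => True)
  simp only [true_and] at den
  have P1 : 0 < Pr μ (SameInfo f0 f ℓ g i t ω₁) := pr_pos hμ (hself t ω₁) h1
  have P2 : 0 < Pr μ (SameInfo f0 f ℓ g i t ω₂) := pr_pos hμ (hself t ω₂) h2
  have Q1 : 0 < Pr μ (SameInfo f0 f ℓ g i (t + 1) ω₁) := pr_pos hμ (hself _ ω₁) h1
  have Q2 : 0 < Pr μ (SameInfo f0 f ℓ g i (t + 1) ω₂) := pr_pos hμ (hself _ ω₂) h2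
  funext x
  refine (div_eq_div_iff Q1.ne' Q2.ne').2 ?_
  have num := key (fun y => y = x)
  change Pr μ (fun ω => XpP f0 f ℓ g i (t + 1) ω = x ∧ SameInfo f0 f ℓ g i (t + 1) ω₁ ω) *
      Pr μ (SameInfo f0 f ℓ g i (t + 1) ω₂) =
    Pr μ (fun ω => XpP f0 f ℓ g i (t + 1) ω = x ∧ SameInfo f0 f ℓ g i (t + 1) ω₂ ω) *
      Pr μ (SameInfo f0 f ℓ g i (t + 1) ω₁)
  refine mul_right_cancel₀ (mul_ne_zero P1.ne' P2.ne') ?_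
  linear_combination
    (Pr μ (SameInfo f0 f ℓ g i (t + 1) ω₂) * Pr μ (SameInfo f0 f ℓ g i t ω₁)) * num -
    (Pr μ (fun ω => XpP f0 f ℓ g i (t + 1) ω = x ∧ SameInfo f0 f ℓ g i (t + 1) ω₂ ω) *
      Pr μ (SameInfo f0 f ℓ g i t ω₁)) * den

/-- The information `(Yⁱ_{1:t}, Z_{1:t}, U_{1:t-1})` as a random variable. -/
noncomputable def infoP (i : Fin n) (t : ℕ) (ω : OmegaP T Z X W0 W WT) :
    (Fin (t + 1) → Y i) × (Fin (t + 1) → Z) × (Fin t → ∀ j, U j) :=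
  (fun s => YpP f0 f ℓ g i s ω, fun s => ZpP f0 f ℓ g s ω, fun s j => UpP f0 f ℓ g j s ω)

theorem infoP_eq_iff {i : Fin n} {t : ℕ} {ω ω' : OmegaP T Z X W0 W WT} :
    infoP f0 f ℓ g i t ω' = infoP f0 f ℓ g i t ω ↔ SameInfo f0 f ℓ g i t ω ω' := by
  simp only [infoP, Prod.mk.injEq, funext_iff, SameInfo]
  constructor
  · rintro ⟨h1, h2, h3⟩
    exact ⟨fun s hs => h1 ⟨s, Nat.lt_succ_iff.2 hs⟩, fun s hs => h2 ⟨s, Nat.lt_succ_iff.2 hs⟩,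
      fun s hs => h3 ⟨s, hs⟩⟩
  · rintro ⟨h1, h2, h3⟩
    exact ⟨fun s => h1 s (Nat.lt_succ_iff.1 s.2), fun s => h2 s (Nat.lt_succ_iff.1 s.2),
      fun s => h3 s s.2⟩

end Dynamics

/-! ### The controlled Markov property -/

/-- Lemma 8: in the partial observation model, for an arbitrary but fixed
control strategy `g`, define `Rⁱ_t = (Ξⁱ_t, Z_{1:t}, U_{1:t-1})`. Then (1) the process
`{Rⁱ_t}` is a controlled Markov process with control action `Uⁱ_t`:
`P(Rⁱ_{t+1} ∈ B | Rⁱ_{1:t}, Uⁱ_{1:t}) = P(Rⁱ_{t+1} ∈ B | Rⁱ_t, Uⁱ_t)` for all (arbitrary,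
hence in the finite setting measurable) sets `B`; and (2) the instantaneous conditional cost
simplifies: `E[c_t(Z_t, X_t, U_t) | Rⁱ_{1:t}, Uⁱ_{1:t}] = E[c_t(Z_t, X_t, U_t) | Rⁱ_t, Uⁱ_t]`.
Conditioning on `Rⁱ_{1:t} = rⁱ_{1:t}, Uⁱ_{1:t} = uⁱ_{1:t}` fixes
`(Ξⁱ_{1:t}, Z_{1:t}, U_{1:t-1}, Uⁱ_{1:t})` and conditioning on `Rⁱ_t = rⁱ_t, Uⁱ_t = uⁱ_t`
fixes `(Ξⁱ_t, Z_{1:t}, U_{1:t-1}, Uⁱ_t)`. -/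
theorem partial_obs_controlled_markov_and_cost
    (PZ : Z → ℝ) (PX : ∀ i, Z → X i → ℝ) (PW0 : W0 → ℝ)
    (PW : ∀ i, W i → ℝ) (PWT : ∀ i, WT i → ℝ)
    (hPZ : IsLaw PZ) (hPX : ∀ i z, IsLaw (PX i z))
    (hPW0 : IsLaw PW0) (hPW : ∀ i, IsLaw (PW i)) (hPWT : ∀ i, IsLaw (PWT i))
    (c : ℕ → Z → (∀ i, X i) → (∀ i, U i) → ℝ)
    (g : StrategyP Z Y U) (i : Fin n)
    (t : ℕ) (ht : t + 1 < T)
    (ξ : ℕ → (X i → ℝ)) (z : ℕ → Z) (u : ℕ → ∀ j, U j) (ui : ℕ → U i)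
    (hpos1 : 0 < Pr (weightP (T := T) PZ PX PW0 PW PWT)
      (fun ω => (∀ s ≤ t, XiBelief f0 f ℓ (weightP PZ PX PW0 PW PWT) g i s ω = ξ s) ∧
        (∀ s ≤ t, ZpP f0 f ℓ g s ω = z s) ∧
        (∀ s < t, ∀ j, UpP f0 f ℓ g j s ω = u s j) ∧
        (∀ s ≤ t, UpP f0 f ℓ g i s ω = ui s)))
    (hpos2 : 0 < Pr (weightP (T := T) PZ PX PW0 PW PWT)
      (fun ω => XiBelief f0 f ℓ (weightP PZ PX PW0 PW PWT) g i t ω = ξ t ∧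
        (∀ s ≤ t, ZpP f0 f ℓ g s ω = z s) ∧
        (∀ s < t, ∀ j, UpP f0 f ℓ g j s ω = u s j) ∧
        UpP f0 f ℓ g i t ω = ui t)) :
    (∀ B : Set ((X i → ℝ) × (Fin (t + 2) → Z) × (Fin (t + 1) → ∀ j, U j)),
      CondPr (weightP (T := T) PZ PX PW0 PW PWT)
          (fun ω => (XiBelief f0 f ℓ (weightP PZ PX PW0 PW PWT) g i (t + 1) ω,
            fun s : Fin (t + 2) => ZpP f0 f ℓ g s ω,
            fun (s : Fin (t + 1)) (j : Fin n) => UpP f0 f ℓ g j s ω) ∈ B)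
          (fun ω => (∀ s ≤ t, XiBelief f0 f ℓ (weightP PZ PX PW0 PW PWT) g i s ω = ξ s) ∧
            (∀ s ≤ t, ZpP f0 f ℓ g s ω = z s) ∧
            (∀ s < t, ∀ j, UpP f0 f ℓ g j s ω = u s j) ∧
            (∀ s ≤ t, UpP f0 f ℓ g i s ω = ui s)) =
        CondPr (weightP (T := T) PZ PX PW0 PW PWT)
          (fun ω => (XiBelief f0 f ℓ (weightP PZ PX PW0 PW PWT) g i (t + 1) ω,
            fun s : Fin (t + 2) => ZpP f0 f ℓ g s ω,
            fun (s : Fin (t + 1)) (j : Fin n) => UpP f0 f ℓ g j s ω) ∈ B)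
          (fun ω => XiBelief f0 f ℓ (weightP PZ PX PW0 PW PWT) g i t ω = ξ t ∧
            (∀ s ≤ t, ZpP f0 f ℓ g s ω = z s) ∧
            (∀ s < t, ∀ j, UpP f0 f ℓ g j s ω = u s j) ∧
            UpP f0 f ℓ g i t ω = ui t)) ∧
    CondExp (weightP (T := T) PZ PX PW0 PW PWT)
        (fun ω => c t (ZpP f0 f ℓ g t ω) (fun j => XpP f0 f ℓ g j t ω)
          (fun j => UpP f0 f ℓ g j t ω))
        (fun ω => (∀ s ≤ t, XiBelief f0 f ℓ (weightP PZ PX PW0 PW PWT) g i s ω = ξ s) ∧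
          (∀ s ≤ t, ZpP f0 f ℓ g s ω = z s) ∧
          (∀ s < t, ∀ j, UpP f0 f ℓ g j s ω = u s j) ∧
          (∀ s ≤ t, UpP f0 f ℓ g i s ω = ui s)) =
      CondExp (weightP (T := T) PZ PX PW0 PW PWT)
        (fun ω => c t (ZpP f0 f ℓ g t ω) (fun j => XpP f0 f ℓ g j t ω)
          (fun j => UpP f0 f ℓ g j t ω))
        (fun ω => XiBelief f0 f ℓ (weightP PZ PX PW0 PW PWT) g i t ω = ξ t ∧
          (∀ s ≤ t, ZpP f0 f ℓ g s ω = z s) ∧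
          (∀ s < t, ∀ j, UpP f0 f ℓ g j s ω = u s j) ∧
          UpP f0 f ℓ g i t ω = ui t) := by
  set μ : OmegaP T Z X W0 W WT → ℝ := weightP PZ PX PW0 PW PWT with hμdef
  have hμ : ∀ ω, 0 ≤ μ ω := weightP_nonneg PZ PX PW0 PW PWT hPZ hPX hPW0 hPW hPWT
  set E1 : OmegaP T Z X W0 W WT → Prop := fun ω =>
    (∀ s ≤ t, XiBelief f0 f ℓ μ g i s ω = ξ s) ∧ (∀ s ≤ t, ZpP f0 f ℓ g s ω = z s) ∧
      (∀ s < t, ∀ j, UpP f0 f ℓ g j s ω = u s j) ∧ (∀ s ≤ t, UpP f0 f ℓ g i s ω = ui s) with hE1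
  set E2 : OmegaP T Z X W0 W WT → Prop := fun ω =>
    XiBelief f0 f ℓ μ g i t ω = ξ t ∧ (∀ s ≤ t, ZpP f0 f ℓ g s ω = z s) ∧
      (∀ s < t, ∀ j, UpP f0 f ℓ g j s ω = u s j) ∧ UpP f0 f ℓ g i t ω = ui t with hE2
  have h12 : ∀ ω, E1 ω → E2 ω := fun ω h => ⟨h.1 t le_rfl, h.2.1, h.2.2.1, h.2.2.2 t le_rfl⟩
  have m1 : ∀ ω ω', infoP f0 f ℓ g i t ω' = infoP f0 f ℓ g i t ω → E1 ω → E1 ω' := by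
    intro ω ω' hI h
    rw [infoP_eq_iff] at hI
    exact ⟨fun s hs => (XiBelief_congr f0 f ℓ g μ (hI.mono f0 f ℓ g hs)).trans (h.1 s hs),
      fun s hs => (hI.2.1 s hs).trans (h.2.1 s hs),
      fun s hs j => (hI.2.2 s hs j).trans (h.2.2.1 s hs j),
      fun s hs => ((hI.mono f0 f ℓ g hs).UpP).trans (h.2.2.2 s hs)⟩
  have m2 : ∀ ω ω', infoP f0 f ℓ g i t ω' = infoP f0 f ℓ g i t ω → E2 ω → E2 ω' := by
    intro ω ω' hI h
    rw [infoP_eq_iff] at hI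
    exact ⟨(XiBelief_congr f0 f ℓ g μ hI).trans h.1,
      fun s hs => (hI.2.1 s hs).trans (h.2.1 s hs),
      fun s hs j => (hI.2.2 s hs j).trans (h.2.2.1 s hs j), hI.UpP.trans h.2.2.2⟩
  have hcomm : ∀ ω ω', E2 ω → E2 ω' → SameCommon f0 f ℓ g t ω ω' := fun ω ω' h h' =>
    ⟨fun s hs => (h'.2.1 s hs).trans (h.2.1 s hs).symm,
      fun s hs j => (h'.2.2.1 s hs j).trans (h.2.2.1 s hs j).symm⟩
  obtain ⟨ω₀, hω₀, hw₀⟩ := exists_of_pr_pos hpos2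
  -- A function unaffected by transplanting the local past has a common average over all
  -- information values compatible with `E2`, hence the same average over `E1` and `E2`.
  have main : ∀ h : OmegaP T Z X W0 W WT → ℝ,
      (∀ ω ω', E2 ω → E2 ω' → XpP f0 f ℓ g i t ω' = XpP f0 f ℓ g i t ω →
        E2 (mixP i t ω ω') → μ ω ≠ 0 → μ (mixP i t ω ω') ≠ 0 → h ω = h (mixP i t ω ω')) →
      CondExp μ h E1 = CondExp μ h E2 := by
    intro h hh
    have P0 : 0 < Pr μ (SameInfo f0 f ℓ g i t ω₀) :=
      pr_pos hμ (ω := ω₀) ⟨fun _ _ => rfl, fun _ _ => rfl, fun _ _ _ => rfl⟩ hw₀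
    have hK : ∀ ω, E2 ω → μ ω ≠ 0 →
        (∑ ω', @ite _ (infoP f0 f ℓ g i t ω' = infoP f0 f ℓ g i t ω) (Classical.propDecidable _)
          (μ ω' * h ω') 0) =
        (∑ ω', if SameInfo f0 f ℓ g i t ω₀ ω' then μ ω' * h ω' else 0) /
          Pr μ (SameInfo f0 f ℓ g i t ω₀) *
          Pr μ (fun ω' => infoP f0 f ℓ g i t ω' = infoP f0 f ℓ g i t ω) := by
      intro ω hω hw
      simp only [infoP_eq_iff]
      rw [div_mul_eq_mul_div, eq_div_iff P0.ne']
      refine sum_atom_exchange f0 f ℓ g PZ PX PW0 PW PWT hμ hw hw₀ (hcomm _ _ hω hω₀)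
        (hω.1.trans hω₀.1.symm) h h ?_
      intro α β hα hβ _ hX hmix hwα hwm
      exact hh α β (m2 _ _ ((infoP_eq_iff f0 f ℓ g).2 hα) hω)
        (m2 _ _ ((infoP_eq_iff f0 f ℓ g).2 hβ) hω₀) hX
        (m2 _ _ ((infoP_eq_iff f0 f ℓ g).2 hmix) hω₀) hwα hwm
    rw [condExp_eq_of_fibers (infoP f0 f ℓ g i t) h E1 m1 _ (fun ω hω => hK ω (h12 ω hω)) hpos1,
      condExp_eq_of_fibers (infoP f0 f ℓ g i t) h E2 m2 _ hK hpos2]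
  constructor
  · intro B
    rw [condPr_eq_condExp, condPr_eq_condExp]
    refine main _ fun ω ω' h h' hX hm hw hwm => ?_
    obtain ⟨nU, _, nZ, _, nY⟩ := mixP_next f0 f ℓ g i t ω ω' (hcomm _ _ h h')
      (h'.2.2.2.trans h.2.2.2.symm) hX
    have hc := hcomm _ _ h hm
    have e1 : XiBelief f0 f ℓ μ g i (t + 1) ω = XiBelief f0 f ℓ μ g i (t + 1) (mixP i t ω ω') :=
      XiBelief_succ_congr f0 f ℓ g PZ PX PW0 PW PWT hμ hw hwm hc (h.1.trans hm.1.symm) nY nZ nU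
    have e2 : (fun s : Fin (t + 2) => ZpP f0 f ℓ g s ω) =
        fun s : Fin (t + 2) => ZpP f0 f ℓ g s (mixP i t ω ω') := by
      funext s
      rcases Nat.le_succ_iff.1 (Nat.lt_succ_iff.1 s.2) with hs | hs
      · exact (hc.1 s hs).symm
      · rw [hs]; exact nZ.symm
    have e3 : (fun (s : Fin (t + 1)) (j : Fin n) => UpP f0 f ℓ g j s ω) =
        fun (s : Fin (t + 1)) (j : Fin n) => UpP f0 f ℓ g j s (mixP i t ω ω') := by
      funext s j
      rcases Nat.lt_succ_iff_lt_or_eq.1 s.2 with hs | hs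
      · exact (hc.2 s hs j).symm
      · rw [hs]; exact (nU j).symm
    simp only [e1, e2, e3]
  · refine main _ fun ω ω' h h' hX hm _ _ => ?_
    obtain ⟨nU, nX, _, _, _⟩ := mixP_next f0 f ℓ g i t ω ω' (hcomm _ _ h h')
      (h'.2.2.2.trans h.2.2.2.symm) hX
    simp only [nU, nX, (hcomm _ _ h hm).1 t le_rfl]

end ControlSharing
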